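/- Suppose the Fractional assumptions hold and that the commutator [M_α, b] : L^φ(ℝⁿ) → L^ψ(ℝⁿ) is bounded for some b ∈ L¹_loc(ℝⁿ). Then b ∈ BMO(ℝⁿ), and there is a finite constant C independent of Q such that ‖(b − |Q|^{−α/n} M_{α,Q} b)·χ_Q‖_{L^ψ(ℝⁿ)} ≤ C‖χ_Q‖_{L^ψ(ℝⁿ)} for every cube Q ⊂ ℝⁿ. -/

import Mathlib

open MeasureTheory NNReal ENNReal Filter Set

noncomputable section

/-- `ℝⁿ` with the Euclidean structure. -/
abbrev RSp (n : ℕ) := EuclideanSpace ℝ (Fin n)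

variable {n : ℕ}

/-- A cube in `ℝⁿ` with sides parallel to the coordinate axes,
with center `c` and side length `2r`. -/
structure Cube (n : ℕ) where
  c : RSp n
  r : ℝ
  r_pos : 0 < r

/-- The underlying set of a cube. -/
def Cube.set (Q : Cube n) : Set (RSp n) := {y | ∀ i, |y i - Q.c i| ≤ Q.r}

/-- A weak Φ-function on `Ω` (the class `Φ_w(Ω)`). -/
structure IsWeakPhi (Ω : Set (RSp n)) (φ : RSp n → ℝ≥0 → ℝ≥0∞) : Prop where
  meas : ∀ f : RSp n → ℝ≥0, Measurable f →
    AEMeasurable (fun x => φ x (f x)) (volume.restrict Ω)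
  mono : ∀ x ∈ Ω, Monotone (φ x)
  zero : ∀ x ∈ Ω, φ x 0 = 0
  lim_zero : ∀ x ∈ Ω, Tendsto (fun t : ℝ≥0 => φ x t) (nhdsWithin 0 (Set.Ioi 0)) (nhds 0)
  lim_top : ∀ x ∈ Ω, Tendsto (fun t : ℝ≥0 => φ x t) atTop (nhds ∞)
  almost_inc : ∃ L : ℝ≥0, 1 ≤ L ∧ ∀ x ∈ Ω, ∀ s t : ℝ≥0, 0 < s → s < t →
    φ x s / (s : ℝ≥0∞) ≤ (L : ℝ≥0∞) * (φ x t / (t : ℝ≥0∞))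

/-- A convex Φ-function on `Ω` (the class `Φ_c(Ω)`): a weak Φ-function which is
additionally convex and left-continuous in `t` for a.e. `x ∈ Ω`. -/
structure IsConvexPhi (Ω : Set (RSp n)) (φ : RSp n → ℝ≥0 → ℝ≥0∞)
    extends IsWeakPhi Ω φ : Prop where
  convex : ∀ᵐ x ∂(volume.restrict Ω), ∀ s t a b : ℝ≥0, a + b = 1 →
    φ x (a * s + b * t) ≤ (a : ℝ≥0∞) * φ x s + (b : ℝ≥0∞) * φ x t
  left_cont : ∀ᵐ x ∂(volume.restrict Ω), ∀ t : ℝ≥0,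
    Tendsto (φ x) (nhdsWithin t (Set.Iio t)) (nhds (φ x t))

/-- A strong Φ-function on `Ω` (the class `Φ_s(Ω)`): a weak Φ-function which is
additionally convex and continuous into `[0,∞]` for a.e. `x ∈ Ω`. -/
structure IsStrongPhi (Ω : Set (RSp n)) (φ : RSp n → ℝ≥0 → ℝ≥0∞)
    extends IsWeakPhi Ω φ : Prop where
  convex : ∀ᵐ x ∂(volume.restrict Ω), ∀ s t a b : ℝ≥0, a + b = 1 →
    φ x (a * s + b * t) ≤ (a : ℝ≥0∞) * φ x s + (b : ℝ≥0∞) * φ x t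
  cont : ∀ᵐ x ∂(volume.restrict Ω), Continuous (φ x)

/-- The generalized (left-)inverse `φ⁻¹(x,t) = inf {τ ≥ 0 : φ(x,τ) ≥ t}`. -/
def phiInv (φ : RSp n → ℝ≥0 → ℝ≥0∞) (x : RSp n) (t : ℝ≥0∞) : ℝ≥0∞ :=
  sInf ((fun s : ℝ≥0 => (s : ℝ≥0∞)) '' {s : ℝ≥0 | t ≤ φ x s})

/-- The condition `(aInc)_p` on `Ω`: `t ↦ φ(x,t)/t^p` is almost increasing, uniformly in `x`. -/
def AInc (p : ℝ) (Ω : Set (RSp n)) (φ : RSp n → ℝ≥0 → ℝ≥0∞) : Prop :=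
  ∃ L : ℝ≥0, 1 ≤ L ∧ ∀ x ∈ Ω, ∀ s t : ℝ≥0, 0 < s → s < t →
    φ x s / (s : ℝ≥0∞) ^ p ≤ (L : ℝ≥0∞) * (φ x t / (t : ℝ≥0∞) ^ p)

/-- The condition `(aDec)_q` on `Ω`: `t ↦ φ(x,t)/t^q` is almost decreasing, uniformly in `x`. -/
def ADec (q : ℝ) (Ω : Set (RSp n)) (φ : RSp n → ℝ≥0 → ℝ≥0∞) : Prop :=
  ∃ L : ℝ≥0, 1 ≤ L ∧ ∀ x ∈ Ω, ∀ s t : ℝ≥0, 0 < s → s < t →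
    φ x t / (t : ℝ≥0∞) ^ q ≤ (L : ℝ≥0∞) * (φ x s / (s : ℝ≥0∞) ^ q)

/-- The condition `(A0)` on `Ω`: `β ≤ φ⁻¹(x,1) ≤ 1/β` for a.e. `x ∈ Ω`. -/
def A0 (Ω : Set (RSp n)) (φ : RSp n → ℝ≥0 → ℝ≥0∞) : Prop :=
  ∃ β : ℝ≥0, 0 < β ∧ β ≤ 1 ∧ ∀ᵐ x ∂(volume.restrict Ω),
    (β : ℝ≥0∞) ≤ phiInv φ x 1 ∧ phiInv φ x 1 ≤ (β : ℝ≥0∞)⁻¹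

/-- The condition `(A1)` (on all of `ℝⁿ`). -/
def A1 (φ : RSp n → ℝ≥0 → ℝ≥0∞) : Prop :=
  ∃ β : ℝ≥0, 0 < β ∧ β < 1 ∧ ∀ Q : Cube n, volume Q.set ≤ 1 →
    ∀ᵐ x ∂(volume.restrict Q.set), ∀ᵐ y ∂(volume.restrict Q.set),
      ∀ t : ℝ≥0∞, 1 ≤ t → t ≤ (volume Q.set)⁻¹ →
        (β : ℝ≥0∞) * phiInv φ x t ≤ phiInv φ y t

/-- The condition `(A2)` (on all of `ℝⁿ`). -/
def A2 (φ : RSp n → ℝ≥0 → ℝ≥0∞) : Prop :=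
  ∃ φi : ℝ≥0 → ℝ≥0∞, IsWeakPhi Set.univ (fun _ : RSp n => φi) ∧
  ∃ h : RSp n → ℝ≥0∞, (∫⁻ x, h x) < ∞ ∧ (∃ M : ℝ≥0, ∀ᵐ x ∂(volume : Measure (RSp n)), h x ≤ M) ∧
  ∃ β : ℝ≥0, 0 < β ∧ β ≤ 1 ∧ ∃ s : ℝ≥0, 0 < s ∧
    ∀ᵐ x ∂(volume : Measure (RSp n)), ∀ t : ℝ≥0,
      (φi t ≤ (s : ℝ≥0∞) → φ x (β * t) ≤ φi t + h x) ∧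
      (φ x t ≤ (s : ℝ≥0∞) → φi (β * t) ≤ φ x t + h x)

/-- Membership in the generalized Orlicz space `L^φ(Ω)`. -/
def MemOrlicz (φ : RSp n → ℝ≥0 → ℝ≥0∞) (Ω : Set (RSp n)) (f : RSp n → ℝ) : Prop :=
  AEMeasurable f (volume.restrict Ω) ∧
  ∃ lam : ℝ≥0, 0 < lam ∧ (∫⁻ x in Ω, φ x (lam * ‖f x‖₊) ∂volume) < ∞

/-- The Luxemburg (quasi)norm of `L^φ(Ω)`. -/
def orliczNorm (φ : RSp n → ℝ≥0 → ℝ≥0∞) (Ω : Set (RSp n)) (f : RSp n → ℝ) : ℝ≥0∞ :=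
  sInf ((fun lam : ℝ≥0 => (lam : ℝ≥0∞)) ''
    {lam : ℝ≥0 | 0 < lam ∧ (∫⁻ x in Ω, φ x (‖f x‖₊ / lam) ∂volume) ≤ 1})

/-- The canonical extension of `φ(x,·)` to `[0,∞]`. -/
def phiE (φ : RSp n → ℝ≥0 → ℝ≥0∞) (x : RSp n) (t : ℝ≥0∞) : ℝ≥0∞ :=
  ⨆ (s : ℝ≥0) (_ : (s : ℝ≥0∞) ≤ t), φ x s

/-- The Luxemburg (quasi)norm for `[0,∞]`-valued functions. -/
def orliczNormE (φ : RSp n → ℝ≥0 → ℝ≥0∞) (Ω : Set (RSp n)) (g : RSp n → ℝ≥0∞) : ℝ≥0∞ :=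
  sInf ((fun lam : ℝ≥0 => (lam : ℝ≥0∞)) ''
    {lam : ℝ≥0 | 0 < lam ∧ (∫⁻ x in Ω, phiE φ x (g x / (lam : ℝ≥0∞)) ∂volume) ≤ 1})

/-- The average `b_Q` of `b` over the cube `Q`. -/
def cubeAvg (Q : Cube n) (b : RSp n → ℝ) : ℝ := ⨍ x in Q.set, b x

/-- The BMO seminorm `‖b‖_*`. -/
def bmoNorm (b : RSp n → ℝ) : ℝ≥0∞ :=
  ⨆ Q : Cube n, (volume Q.set)⁻¹ * ∫⁻ x in Q.set, ‖b x - cubeAvg Q b‖₊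

/-- `b ∈ BMO(ℝⁿ)`. -/
def IsBMO (b : RSp n → ℝ) : Prop := LocallyIntegrable b volume ∧ bmoNorm b < ∞

/-- The non-centred Hardy–Littlewood maximal function (over axes-parallel cubes). -/
def maximal (f : RSp n → ℝ) (x : RSp n) : ℝ≥0∞ :=
  ⨆ (Q : Cube n) (_ : x ∈ Q.set), (volume Q.set)⁻¹ * ∫⁻ y in Q.set, (‖f y‖₊ : ℝ≥0∞) ∂volume

/-- The fractional maximal function `M_α`. -/
def fracMaximal (α : ℝ) (f : RSp n → ℝ) (x : RSp n) : ℝ≥0∞ :=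
  ⨆ (Q : Cube n) (_ : x ∈ Q.set),
    volume Q.set ^ (α / (n : ℝ) - 1) * ∫⁻ y in Q.set, (‖f y‖₊ : ℝ≥0∞) ∂volume

/-- The maximal function restricted to subcubes of `Q₀`. -/
def restMaximal (Q₀ : Cube n) (f : RSp n → ℝ) (x : RSp n) : ℝ≥0∞ :=
  ⨆ (Q : Cube n) (_ : x ∈ Q.set) (_ : Q.set ⊆ Q₀.set),
    (volume Q.set)⁻¹ * ∫⁻ y in Q.set, (‖f y‖₊ : ℝ≥0∞) ∂volume

/-- The fractional maximal function restricted to subcubes of `Q₀`. -/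
def restFracMaximal (α : ℝ) (Q₀ : Cube n) (f : RSp n → ℝ) (x : RSp n) : ℝ≥0∞ :=
  ⨆ (Q : Cube n) (_ : x ∈ Q.set) (_ : Q.set ⊆ Q₀.set),
    volume Q.set ^ (α / (n : ℝ) - 1) * ∫⁻ y in Q.set, (‖f y‖₊ : ℝ≥0∞) ∂volume

/-- The sharp maximal function `M♯`. -/
def sharpMaximal (f : RSp n → ℝ) (x : RSp n) : ℝ≥0∞ :=
  ⨆ (Q : Cube n) (_ : x ∈ Q.set),
    (volume Q.set)⁻¹ * ∫⁻ y in Q.set, (‖f y - ⨍ z in Q.set, f z‖₊ : ℝ≥0∞) ∂volume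

/-- The maximal commutator `M_b`. -/
def maximalComm (b f : RSp n → ℝ) (x : RSp n) : ℝ≥0∞ :=
  ⨆ (Q : Cube n) (_ : x ∈ Q.set),
    (volume Q.set)⁻¹ * ∫⁻ y in Q.set, (‖b x - b y‖₊ : ℝ≥0∞) * (‖f y‖₊ : ℝ≥0∞) ∂volume

/-- The fractional maximal commutator `M_{b,α}`. -/
def fracMaximalComm (α : ℝ) (b f : RSp n → ℝ) (x : RSp n) : ℝ≥0∞ :=
  ⨆ (Q : Cube n) (_ : x ∈ Q.set),
    volume Q.set ^ (α / (n : ℝ) - 1) *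
      ∫⁻ y in Q.set, (‖b x - b y‖₊ : ℝ≥0∞) * (‖f y‖₊ : ℝ≥0∞) ∂volume

/-- The commutator `[M,b]f = M(bf) − b·Mf` of the maximal operator. -/
def maximalCommutator (b f : RSp n → ℝ) (x : RSp n) : ℝ :=
  (maximal (fun y => b y * f y) x).toReal - b x * (maximal f x).toReal

/-- The commutator `[M_α,b]f = M_α(bf) − b·M_α f` of the fractional maximal operator. -/
def fracMaximalCommutator (α : ℝ) (b f : RSp n → ℝ) (x : RSp n) : ℝ :=
  (fracMaximal α (fun y => b y * f y) x).toReal - b x * (fracMaximal α f x).toReal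

/-- The Riesz potential `I_α f`. -/
def riesz (α : ℝ) (f : RSp n → ℝ) (x : RSp n) : ℝ :=
  ∫ y, f y / dist x y ^ ((n : ℝ) - α)

/-- The commutator `[I_α, b]f = I_α(bf) − b·I_α f` of the Riesz potential. -/
def rieszCommutator (α : ℝ) (b f : RSp n → ℝ) (x : RSp n) : ℝ :=
  riesz α (fun y => b y * f y) x - b x * riesz α f x

/-- The operator `I_{b,α} f(x) = ∫ |b(x)−b(y)|·|x−y|^{α−n} f(y) dy`. -/
def rieszAbs (α : ℝ) (b f : RSp n → ℝ) (x : RSp n) : ℝ :=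
  ∫ y, |b x - b y| / dist x y ^ ((n : ℝ) - α) * f y

/-- Equivalence `φ ≃ ψ` of Φ-functions. -/
def PhiEquiv (φ ψ : RSp n → ℝ≥0 → ℝ≥0∞) : Prop :=
  ∃ L : ℝ≥0, 1 ≤ L ∧ ∀ x : RSp n, ∀ t : ℝ≥0, ψ x (t / L) ≤ φ x t ∧ φ x t ≤ ψ x (L * t)

/-- Weak equivalence `φ ∼ ψ` of Φ-functions. -/
def PhiWeakEquiv (φ ψ : RSp n → ℝ≥0 → ℝ≥0∞) : Prop :=
  ∃ L : ℝ≥0, 1 ≤ L ∧ ∃ h : RSp n → ℝ≥0∞, (∫⁻ x, h x) < ∞ ∧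
    ∀ᵐ x ∂(volume : Measure (RSp n)), ∀ t : ℝ≥0,
      ψ x t ≤ φ x (L * t) + h x ∧ φ x t ≤ ψ x (L * t) + h x

/-- The relation `φ⁻¹(x,t) ≈ t^{α/n}·ψ⁻¹(x,t)` with constants independent of `x` and `t > 0`. -/
def FracInvRel (α : ℝ) (φ ψ : RSp n → ℝ≥0 → ℝ≥0∞) : Prop :=
  ∃ c₁ c₂ : ℝ≥0, 0 < c₁ ∧ ∀ x : RSp n, ∀ t : ℝ≥0, 0 < t →
    (c₁ : ℝ≥0∞) * ((t : ℝ≥0∞) ^ (α / (n : ℝ)) * phiInv ψ x t) ≤ phiInv φ x t ∧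
    phiInv φ x t ≤ (c₂ : ℝ≥0∞) * ((t : ℝ≥0∞) ^ (α / (n : ℝ)) * phiInv ψ x t)

/-- The characteristic function of a cube, as a real-valued function. -/
def cubeIndicator (Q : Cube n) : RSp n → ℝ := Q.set.indicator 1

end

/-- The function `(b − |Q|^{−α/n}·M_{α,Q}b)·χ_Q`. -/
noncomputable def commTestFn {n : ℕ} (α : ℝ) (Q : Cube n) (b : RSp n → ℝ) : RSp n → ℝ :=
  Q.set.indicator fun z =>
    b z - (volume Q.set ^ (-(α / (n : ℝ)))).toReal * (restFracMaximal α Q b z).toReal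

/-!
On a cube `Q` one has `M_α(bχ_Q) = M_{α,Q} b` and `M_α χ_Q = |Q|^{α/n}`, so
`(b − |Q|^{−α/n} M_{α,Q} b)χ_Q` is `−|Q|^{−α/n} [M_α, b]χ_Q` on `Q`. Boundedness of the commutator
and `‖χ_Q‖_φ ≲ |Q|^{α/n} ‖χ_Q‖_ψ`, a consequence of `φ⁻¹ ≈ t^{α/n} ψ⁻¹`, give the test estimate.

The estimate implies `b ∈ BMO` because, almost everywhere on `Q`, `|Q|^{−α/n} M_{α,Q} b` is finite
and at least `b_Q`, so that the test function dominates `(b_Q − b)₊`, and because the mean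
oscillation of `b` on `Q` is twice the mean of `(b_Q − b)₊`. It remains to know that
`|Q|⁻¹ ∫_Q |f| ≲ ‖f‖_ψ / ‖χ_Q‖_ψ`. This follows once `ψ⁻¹(x,·)` is comparable, for almost every
`x ∈ Q`, to one number `S ≈ 1 / ‖χ_Q‖_ψ`, up to an error of bounded integral over `Q`. For small
cubes `S` comes from `(A1)` and for large ones from `(A0)` and `(A2)`; both conditions are first
transferred from `φ⁻¹` to `ψ⁻¹`.
-/

section GeneralizedInverse

variable {n : ℕ} {Ω : Set (RSp n)} {φ : RSp n → ℝ≥0 → ℝ≥0∞} {x : RSp n} {u : ℝ≥0∞} {w : ℝ≥0}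

lemma phiInv_le_of_le (h : u ≤ φ x w) : phiInv φ x u ≤ w := sInf_le ⟨w, h, rfl⟩

lemma lt_of_lt_phiInv (h : (w : ℝ≥0∞) < phiInv φ x u) : φ x w < u :=
  lt_of_not_ge fun hc => (phiInv_le_of_le hc).not_gt h

lemma le_phiInv_of_lt (hmono : Monotone (φ x)) (h : φ x w < u) : (w : ℝ≥0∞) ≤ phiInv φ x u := by
  refine le_sInf ?_
  rintro _ ⟨s, hs, rfl⟩
  exact ENNReal.coe_le_coe.2 (hmono.reflect_lt (h.trans_le hs)).le

lemma monotone_phiInv : Monotone (phiInv φ x) := fun _ _ h =>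
  sInf_le_sInf (image_mono fun _ hs => h.trans hs)

lemma IsWeakPhi.phiInv_pos (hφ : IsWeakPhi Ω φ) (hx : x ∈ Ω) (hu : 0 < u) : 0 < phiInv φ x u := by
  obtain ⟨t, htu, ht⟩ :=
    (((hφ.lim_zero x hx).eventually_lt_const hu).and eventually_mem_nhdsWithin).exists
  exact (ENNReal.coe_pos.2 ht).trans_le (le_phiInv_of_lt (hφ.mono x hx) htu)

lemma IsWeakPhi.phiInv_lt_top (hφ : IsWeakPhi Ω φ) (hx : x ∈ Ω) (hu : u < ∞) :
    phiInv φ x u < ∞ := by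
  obtain ⟨t, ht⟩ := ((hφ.lim_top x hx).eventually_const_lt hu).exists
  exact (phiInv_le_of_le ht.le).trans_lt ENNReal.coe_lt_top

/-- `f` is almost superlinear with constant `L`: enlarging the argument `L * k` times enlarges the
value at least `k` times. It follows from `(aInc)₁`, and unlike a bound on `t ↦ f t / t` it involves
no division in `[0,∞]`. -/
def AlmostSuperlinear (L : ℝ≥0) (f : ℝ≥0 → ℝ≥0∞) : Prop :=
  ∀ k : ℝ≥0, 1 ≤ k → ∀ s, k * f s ≤ f (L * k * s)

lemma IsWeakPhi.exists_almostSuperlinear (hφ : IsWeakPhi Ω φ) :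
    ∃ L : ℝ≥0, 1 ≤ L ∧ ∀ x ∈ Ω, AlmostSuperlinear L (φ x) := by
  obtain ⟨L, hL, hinc⟩ := hφ.almost_inc
  refine ⟨L, hL, fun x hx k hk s => ?_⟩
  rcases eq_zero_or_pos s with rfl | hs
  · simp [hφ.zero x hx]
  rcases (one_le_mul hL hk).eq_or_lt with h1 | h1
  · have hk1 : k = 1 := (mul_eq_one_iff_of_one_le hL hk).1 h1.symm |>.2
    simpa [hk1] using hφ.mono x hx (le_mul_of_one_le_left s.2 hL)
  have hLks : (((L * k * s : ℝ≥0)) : ℝ≥0∞) ≠ 0 :=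
    ENNReal.coe_ne_zero.2 (mul_pos (one_pos.trans h1) hs).ne'
  calc (k : ℝ≥0∞) * φ x s = k * (φ x s / s * s) := by
        rw [ENNReal.div_mul_cancel (ENNReal.coe_ne_zero.2 hs.ne') ENNReal.coe_ne_top]
    _ ≤ k * (L * (φ x (L * k * s) / (L * k * s : ℝ≥0)) * s) := by
        gcongr
        exact hinc x hx s _ hs (lt_mul_of_one_lt_left hs h1)
    _ = φ x (L * k * s) / (L * k * s : ℝ≥0) * (L * k * s : ℝ≥0) := by push_cast; ring
    _ = φ x (L * k * s) := ENNReal.div_mul_cancel hLks ENNReal.coe_ne_top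

lemma AlmostSuperlinear.phiInv_mul_le {L k : ℝ≥0} (h : AlmostSuperlinear L (φ x)) (hL : 0 < L)
    (hk : 1 ≤ k) (u : ℝ≥0∞) : phiInv φ x (k * u) ≤ (L * k : ℝ≥0) * phiInv φ x u := by
  have hLk : ((L * k : ℝ≥0) : ℝ≥0∞) ≠ 0 :=
    ENNReal.coe_ne_zero.2 (mul_pos hL (one_pos.trans_le hk)).ne'
  refine (ENNReal.inv_mul_le_iff hLk ENNReal.coe_ne_top).1 (le_sInf ?_)
  rintro _ ⟨s, hs, rfl⟩
  rw [ENNReal.inv_mul_le_iff hLk ENNReal.coe_ne_top, ← ENNReal.coe_mul]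
  exact phiInv_le_of_le ((mul_le_mul_right hs _).trans (h k hk s))

end GeneralizedInverse

section FracInvRel

variable {n : ℕ} {α : ℝ} {φ ψ : RSp n → ℝ≥0 → ℝ≥0∞}

lemma FracInvRel.exists_phiInv_le (h : FracInvRel α φ ψ) :
    ∃ K : ℝ≥0, ∀ (x y : RSp n) (u D : ℝ≥0), 0 < u → phiInv φ x u ≤ D * phiInv φ y u →
      phiInv ψ x u ≤ (K * D : ℝ≥0) * phiInv ψ y u := by
  obtain ⟨c₁, c₂, hc₁, h⟩ := h
  refine ⟨c₂ / c₁, fun x y u D hu hxy => ?_⟩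
  have hT₀ : (u : ℝ≥0∞) ^ (α / n) ≠ 0 := by simp [ENNReal.rpow_eq_zero_iff, hu.ne']
  have hT : (u : ℝ≥0∞) ^ (α / n) ≠ ∞ := by simp [ENNReal.rpow_eq_top_iff, hu.ne']
  have hc₁' : (c₁ : ℝ≥0∞) ≠ 0 := ENNReal.coe_ne_zero.2 hc₁.ne'
  rw [← ENNReal.mul_le_mul_iff_right hT₀ hT, ← ENNReal.mul_le_mul_iff_right hc₁' ENNReal.coe_ne_top]
  calc c₁ * ((u : ℝ≥0∞) ^ (α / n) * phiInv ψ x u)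
      ≤ phiInv φ x u := (h x u hu).1
    _ ≤ D * phiInv φ y u := hxy
    _ ≤ D * (c₂ * ((u : ℝ≥0∞) ^ (α / n) * phiInv ψ y u)) := by gcongr; exact (h y u hu).2
    _ = (c₁ * (c₂ / c₁) * D : ℝ≥0) * ((u : ℝ≥0∞) ^ (α / n) * phiInv ψ y u) := by
      rw [mul_div_cancel₀ _ hc₁.ne']; push_cast; ring
    _ = c₁ * ((u : ℝ≥0∞) ^ (α / n) * ((c₂ / c₁ * D : ℝ≥0) * phiInv ψ y u)) := by push_cast; ring

lemma FracInvRel.exists_comp_mul_le_add (h : FracInvRel α φ ψ) (hα : 0 ≤ α)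
    (hφ : IsWeakPhi univ φ) (hψ : IsWeakPhi univ ψ) :
    ∃ c : ℝ≥0, 0 < c ∧ ∀ (x : RSp n) (t s : ℝ≥0), 0 < t →
      φ x (c * (t ^ (α / (n : ℝ)) * s)) ≤ ψ x s + t := by
  have ha : 0 ≤ α / (n : ℝ) := div_nonneg hα n.cast_nonneg
  obtain ⟨c, _, hc, h⟩ := h
  refine ⟨c / 2, half_pos hc, fun x t s ht => ?_⟩
  rcases eq_zero_or_pos s with rfl | hs
  · simp [hφ.zero x (mem_univ x)]
  rcases eq_or_ne (ψ x s) ∞ with htop | htop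
  · simp [htop]
  lift ψ x s to ℝ≥0 using htop with v hv
  have hs_le : (s : ℝ≥0∞) ≤ phiInv ψ x (v + t : ℝ≥0) := by
    refine le_phiInv_of_lt (hψ.mono x (mem_univ x)) ?_
    rw [← hv]
    exact ENNReal.coe_lt_coe.2 (lt_add_of_pos_right v ht)
  have hlt : ((c / 2 * (t ^ (α / (n : ℝ)) * s) : ℝ≥0) : ℝ≥0∞) < phiInv φ x (v + t : ℝ≥0) := by
    calc ((c / 2 * (t ^ (α / (n : ℝ)) * s) : ℝ≥0) : ℝ≥0∞)
        < (c * (t ^ (α / (n : ℝ)) * s) : ℝ≥0) := by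
          have := mul_pos (NNReal.rpow_pos ht : 0 < t ^ (α / (n : ℝ))) hs
          have := half_lt_self hc
          gcongr
      _ ≤ c * ((v + t : ℝ≥0) ^ (α / (n : ℝ)) * s) := by
          push_cast
          rw [ENNReal.coe_rpow_of_nonneg _ ha]
          gcongr
          exact le_add_self
      _ ≤ c * (((v + t : ℝ≥0) : ℝ≥0∞) ^ (α / (n : ℝ)) * phiInv ψ x (v + t : ℝ≥0)) := by gcongr
      _ ≤ phiInv φ x (v + t : ℝ≥0) := (h x _ (add_pos_of_nonneg_of_pos v.2 ht)).1
  exact_mod_cast (lt_of_lt_phiInv hlt).le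

end FracInvRel

section Comparison

variable {n : ℕ} {α : ℝ} {φ ψ : RSp n → ℝ≥0 → ℝ≥0∞} {x y : RSp n} {L : ℝ≥0}

lemma phiInv_le_mul_phiInv_of_le_add (hmono : Monotone (φ y)) (hL : 0 < L)
    (hsup : AlmostSuperlinear L (φ y)) {f : ℝ≥0 → ℝ≥0∞} {β s u : ℝ≥0} (hβ : 0 < β) (hu : 0 < u)
    (hus : u + u ≤ s) (hxf : ∀ t : ℝ≥0, φ x t ≤ s → f (β * t) ≤ φ x t + u)
    (hfy : ∀ t : ℝ≥0, f t ≤ s → φ y (β * t) ≤ f t + u) :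
    phiInv φ x u ≤ (L * 4 / (β * β) : ℝ≥0) * phiInv φ y u := by
  refine ENNReal.le_of_forall_nnreal_lt fun w hw => ?_
  have hββ : β * β ≠ 0 := (mul_pos hβ hβ).ne'
  have hus' : (u : ℝ≥0∞) + u ≤ s := mod_cast hus
  have hxw : φ x w ≤ u := (lt_of_lt_phiInv hw).le
  have hfw : f (β * w) ≤ u + u :=
    (hxf w (hxw.trans (le_self_add.trans hus'))).trans (by gcongr)
  have hyw : φ y (β * (β * w)) < ((4 : ℝ≥0) : ℝ≥0∞) * u := by
    calc φ y (β * (β * w)) ≤ u + u + u := (hfy _ (hfw.trans hus')).trans (by gcongr)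
      _ = ((3 * u : ℝ≥0) : ℝ≥0∞) := by push_cast; ring
      _ < (4 * u : ℝ≥0) := by gcongr; norm_num
      _ = ((4 : ℝ≥0) : ℝ≥0∞) * u := ENNReal.coe_mul _ _
  rw [← ENNReal.mul_le_mul_iff_right (ENNReal.coe_ne_zero.2 hββ) ENNReal.coe_ne_top]
  calc ((β * β : ℝ≥0) : ℝ≥0∞) * w = (β * (β * w) : ℝ≥0) := by push_cast; ring
    _ ≤ phiInv φ y ((4 : ℝ≥0) * u) := le_phiInv_of_lt hmono hyw
    _ ≤ (L * 4 : ℝ≥0) * phiInv φ y u := hsup.phiInv_mul_le hL (by norm_num) u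
    _ = (β * β : ℝ≥0) * ((L * 4 / (β * β) : ℝ≥0) * phiInv φ y u) := by
      rw [← mul_assoc, ← ENNReal.coe_mul, mul_div_cancel₀ _ hββ]

lemma phiInv_le_mul_phiInv_of_bounds (hL : 0 < L) (hsup : AlmostSuperlinear L (φ y))
    {β σ u : ℝ≥0} (hβ : 0 < β) (hσ : 0 < σ) (hσu : σ ≤ u) (hu : u ≤ 1)
    (hx : phiInv φ x 1 ≤ (β : ℝ≥0∞)⁻¹) (hy : (β : ℝ≥0∞) ≤ phiInv φ y 1) :
    phiInv φ x u ≤ (L * σ⁻¹ / (β * β) : ℝ≥0) * phiInv φ y u := by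
  have hu₀ : 0 < u := hσ.trans_le hσu
  calc phiInv φ x u ≤ phiInv φ x 1 := monotone_phiInv (mod_cast hu)
    _ ≤ (β : ℝ≥0∞)⁻¹ := hx
    _ = ((β * β)⁻¹ : ℝ≥0) * β := by
      rw [← ENNReal.coe_inv hβ.ne', ← ENNReal.coe_mul]
      congr 1
      field_simp
    _ ≤ ((β * β)⁻¹ : ℝ≥0) * phiInv φ y ((u⁻¹ : ℝ≥0) * u) := by
      rw [← ENNReal.coe_mul u⁻¹, inv_mul_cancel₀ hu₀.ne', ENNReal.coe_one]
      gcongr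
    _ ≤ ((β * β)⁻¹ : ℝ≥0) * ((L * σ⁻¹ : ℝ≥0) * phiInv φ y u) := by
      gcongr
      refine (hsup.phiInv_mul_le hL ((one_le_inv₀ hu₀).2 hu) u).trans ?_
      gcongr
    _ = (L * σ⁻¹ / (β * β) : ℝ≥0) * phiInv φ y u := by
      rw [← mul_assoc, ← ENNReal.coe_mul, div_eq_inv_mul]

/-- For almost all `x` and `y`, the inverses `φ⁻¹(x,u)` and `φ⁻¹(y,u)` agree up to the factor `C`
at every level `u ∈ (0,1]` above `h x` and `h y`. Conditions `(A0)` and `(A2)` yield this with an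
integrable `h`; since it only involves `φ⁻¹`, it passes to `ψ` when
`φ⁻¹(x,t) ≈ t^{α/n}·ψ⁻¹(x,t)`. -/
def PhiInvComparableAbove (φ : RSp n → ℝ≥0 → ℝ≥0∞) (h : RSp n → ℝ≥0) (C : ℝ≥0) : Prop :=
  ∃ s ∈ ae (volume : Measure (RSp n)), ∀ x ∈ s, ∀ y ∈ s, ∀ u : ℝ≥0, 0 < u → u ≤ 1 →
    h x ≤ u → h y ≤ u → phiInv φ x u ≤ C * phiInv φ y u

lemma exists_phiInvComparableAbove (hφ : IsWeakPhi univ φ) (h0 : A0 univ φ) (h2 : A2 φ) :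
    ∃ h : RSp n → ℝ≥0, (∀ x, h x ≤ 1) ∧ ∫⁻ x, h x < ∞ ∧ ∃ C, PhiInvComparableAbove φ h C := by
  obtain ⟨L, hL, hsup⟩ := hφ.exists_almostSuperlinear
  obtain ⟨β₀, hβ₀, -, h0⟩ := h0
  obtain ⟨f, -, h, hfin, -, β, hβ, -, s, hs, h2⟩ := h2
  have hmin : ∀ x, min (h x) 1 ≠ ∞ := fun x => ((min_le_right _ _).trans_lt one_lt_top).ne
  set σ : ℝ≥0 := min (s / 2) 1
  have hσ : 0 < σ := lt_min (half_pos hs) one_pos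
  refine ⟨fun x => (min (h x) 1).toNNReal, fun x => ?_, ?_, max (L * 4 / (β * β))
    (L * σ⁻¹ / (β₀ * β₀)), _, inter_mem (Measure.restrict_univ (μ := volume (α := RSp n)) ▸ h0) h2,
    fun x ⟨hx₀, hx⟩ y ⟨hy₀, hy⟩ u hu₀ hu hxu hyu => ?_⟩
  · simpa using ENNReal.toNNReal_mono one_ne_top (min_le_right (h x) 1)
  · refine (lintegral_mono fun x => ?_).trans_lt hfin
    rw [ENNReal.coe_toNNReal (hmin x)]
    exact min_le_left _ _
  rcases le_or_gt σ u with hσu | huσ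
  · refine (phiInv_le_mul_phiInv_of_bounds (one_pos.trans_le hL) (hsup y (mem_univ y)) hβ₀ hσ hσu hu
      hx₀.2 hy₀.1).trans ?_
    gcongr
    exact le_max_right _ _
  · have hlt : ∀ z, (min (h z) 1).toNNReal ≤ u → h z ≤ u := fun z hz => by
      rw [← ENNReal.coe_le_coe, ENNReal.coe_toNNReal (hmin z)] at hz
      exact (min_le_iff.1 hz).resolve_right (mod_cast (huσ.trans_le (min_le_right _ _)).not_ge)
    have hus : u + u ≤ s := by
      simpa using add_le_add (huσ.le.trans (min_le_left _ _)) (huσ.le.trans (min_le_left _ _))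
    refine (phiInv_le_mul_phiInv_of_le_add (hφ.mono y (mem_univ y)) (one_pos.trans_le hL)
      (hsup y (mem_univ y)) hβ hu₀ hus
      (fun t ht => ((hx t).2 ht).trans (by gcongr; exact hlt x hxu))
      (fun t ht => ((hy t).1 ht).trans (by gcongr; exact hlt y hyu))).trans ?_
    gcongr
    exact le_max_left _ _

lemma PhiInvComparableAbove.exists_of_fracInvRel {h : RSp n → ℝ≥0} {C : ℝ≥0}
    (hcmp : PhiInvComparableAbove φ h C) (hinv : FracInvRel α φ ψ) :
    ∃ C', PhiInvComparableAbove ψ h C' := by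
  obtain ⟨K, hK⟩ := hinv.exists_phiInv_le
  obtain ⟨s, hs, hcmp⟩ := hcmp
  exact ⟨K * C, s, hs, fun x hx y hy u hu₀ hu hxu hyu =>
    hK x y u C hu₀ (hcmp x hx y hy u hu₀ hu hxu hyu)⟩

end Comparison

section Cubes

variable {n : ℕ}

namespace Cube

lemma set_eq_preimage_pi (Q : Cube n) : Q.set = WithLp.ofLp ⁻¹'
    (Set.pi univ fun i => Icc (Q.c i - Q.r) (Q.c i + Q.r)) := by
  ext y
  simp only [Cube.set, mem_ofPred_eq, mem_preimage, mem_univ_pi, mem_Icc, abs_sub_le_iff,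
    sub_le_iff_le_add, add_comm, and_comm]

lemma volume_set (Q : Cube n) : volume Q.set = ENNReal.ofReal (2 * Q.r) ^ n := by
  rw [set_eq_preimage_pi, (PiLp.volume_preserving_ofLp (Fin n)).measure_preimage
    (MeasurableSet.univ_pi fun _ => measurableSet_Icc).nullMeasurableSet, volume_pi_pi]
  simp [Real.volume_Icc, two_mul]

lemma volume_ne_zero (Q : Cube n) : volume Q.set ≠ 0 := by
  simp [volume_set, Q.r_pos]

lemma volume_ne_top (Q : Cube n) : volume Q.set ≠ ∞ := by
  rw [volume_set]
  exact ENNReal.pow_ne_top ENNReal.ofReal_ne_top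

lemma isClosed (Q : Cube n) : IsClosed Q.set := by
  rw [set_eq_preimage_pi]
  exact (isClosed_set_pi fun _ _ => isClosed_Icc).preimage (PiLp.continuous_ofLp 2 _)

lemma measurableSet (Q : Cube n) : MeasurableSet Q.set := Q.isClosed.measurableSet

lemma subset_closedBall (Q : Cube n) {x : RSp n} (hx : x ∈ Q.set) :
    Q.set ⊆ Metric.closedBall x (n * (2 * Q.r)) := by
  intro y hy
  have hcoord : ∀ i, dist (y i) (x i) ≤ 2 * Q.r := fun i => by
    rw [Real.dist_eq, two_mul]
    exact (abs_sub_le _ (Q.c i) _).trans (add_le_add (hy i) (abs_sub_comm (x i) _ ▸ hx i))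
  calc dist y x ≤ ∑ i, dist (y i) (x i) := by
        rw [EuclideanSpace.dist_eq, Real.sqrt_le_left (by positivity)]
        exact Finset.sum_sq_le_sq_sum_of_nonneg fun _ _ => dist_nonneg
    _ ≤ ∑ _i : Fin n, 2 * Q.r := Finset.sum_le_sum fun i _ => hcoord i
    _ = n * (2 * Q.r) := by simp

lemma isCompact (Q : Cube n) : IsCompact Q.set :=
  (isCompact_closedBall _ _).of_isClosed_subset Q.isClosed
    (Q.subset_closedBall (x := Q.c) fun i => by simpa using Q.r_pos.le)

end Cube

end Cubes

section AlmostEverywhere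

variable {X : Type*} [MeasurableSpace X] {μ : Measure X} {f : X → ℝ≥0∞}

lemma ae_essInf_le_and_le_mul_essInf {E : ℝ≥0} (hE : E ≠ 0)
    (h : ∀ᵐ x ∂μ, ∀ᵐ y ∂μ, f x ≤ E * f y) :
    ∀ᵐ x ∂μ, essInf f μ ≤ f x ∧ f x ≤ E * essInf f μ := by
  filter_upwards [ae_essInf_le (f := f) (μ := μ), h] with x hx hxy
  refine ⟨hx, (ENNReal.inv_mul_le_iff (ENNReal.coe_ne_zero.2 hE) ENNReal.coe_ne_top).1 ?_⟩
  exact le_essInf_of_ae_le _ (hxy.mono fun y hy =>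
    (ENNReal.inv_mul_le_iff (ENNReal.coe_ne_zero.2 hE) ENNReal.coe_ne_top).2 hy)

lemma exists_mem_le_of_lintegral_lt_top (hμ : μ univ = ∞) (hf : ∫⁻ x, f x ∂μ < ∞) {t : ℝ≥0∞}
    (ht : 0 < t) {s : Set X} (hs : s ∈ ae μ) : ∃ x ∈ s, f x ≤ t := by
  by_contra! hlt
  have : ∫⁻ _, t ∂μ ≤ ∫⁻ x, f x ∂μ :=
    lintegral_mono_ae (mem_of_superset hs fun x hx => (hlt x hx).le)
  rw [lintegral_const, hμ, ENNReal.mul_top ht.ne', top_le_iff] at this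
  exact hf.ne this

end AlmostEverywhere

section Scale

variable {n : ℕ} {α : ℝ} {φ ψ : RSp n → ℝ≥0 → ℝ≥0∞} {A : Set (RSp n)} {C C' E S : ℝ≥0}
  {U : RSp n → ℝ≥0}

/-- `S` is a scale of `ψ` on `A`, witnessed by the levels `U`: on `A` the number `S` is comparable
to `ψ⁻¹(x,U x)` up to the factor `|A|·U x`, where `U ≥ |A|⁻¹` has integral at most `C`. Such an `S`
is comparable to `1 / ‖χ_A‖_ψ`. If `ψ` does not depend on `x`, then `S = ψ⁻¹(|A|⁻¹)` is a scale
with `U = |A|⁻¹`. -/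
structure IsScale (ψ : RSp n → ℝ≥0 → ℝ≥0∞) (C : ℝ≥0) (A : Set (RSp n)) (S : ℝ≥0)
    (U : RSp n → ℝ≥0) : Prop where
  pos : 0 < S
  inv_volume_le : ∀ x, (volume A)⁻¹ ≤ U x
  lintegral_le : ∫⁻ x in A, U x ≤ C
  le_phiInv : ∀ᵐ x ∂volume.restrict A, S ≤ C * phiInv ψ x (U x)
  phiInv_le : ∀ᵐ x ∂volume.restrict A, phiInv ψ x (U x) ≤ C * (volume A * U x) * S

lemma IsScale.mono (h : IsScale ψ C A S U) (hC : C ≤ C') : IsScale ψ C' A S U where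
  pos := h.pos
  inv_volume_le := h.inv_volume_le
  lintegral_le := h.lintegral_le.trans (mod_cast hC)
  le_phiInv := h.le_phiInv.mono fun x hx => hx.trans (by gcongr)
  phiInv_le := h.phiInv_le.mono fun x hx => hx.trans (by gcongr)

lemma exists_isScale_of_ae_le (hψ : IsWeakPhi univ ψ) (hA₀ : volume A ≠ 0) (hA : volume A ≠ ∞)
    (h : ∀ᵐ x ∂volume.restrict A, ∀ᵐ y ∂volume.restrict A,
      phiInv ψ x (volume A)⁻¹ ≤ E * phiInv ψ y (volume A)⁻¹) :
    ∃ S U, IsScale ψ (max 1 E) A S U := by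
  set t := (volume A)⁻¹
  set μ := volume.restrict A
  have ht : t ≠ ∞ := ENNReal.inv_ne_top.2 hA₀
  have : (ae μ).NeBot := by simpa [μ] using hA₀
  have hE₀ : max 1 E ≠ 0 := (one_pos.trans_le (le_max_left 1 E)).ne'
  have hess := ae_essInf_le_and_le_mul_essInf (f := (phiInv ψ · t)) (E := max 1 E) hE₀
    (h.mono fun x hx => hx.mono fun y hy => hy.trans (by gcongr; exact le_max_right _ _))
  set m := essInf (phiInv ψ · t) μ
  obtain ⟨x, hmx, hxm⟩ := hess.exists
  have hm₀ : m ≠ 0 := fun h0 => (hψ.phiInv_pos (mem_univ x)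
    (ENNReal.inv_pos.2 hA)).not_ge (by simpa [h0] using hxm)
  have hm : m ≠ ∞ := (hmx.trans_lt (hψ.phiInv_lt_top (mem_univ x) ht.lt_top)).ne
  refine ⟨m.toNNReal, fun _ => t.toNNReal, ⟨ENNReal.toNNReal_pos hm₀ hm, ?_, ?_, ?_, ?_⟩⟩ <;>
    simp only [ENNReal.coe_toNNReal ht, ENNReal.coe_toNNReal hm]
  · exact fun _ => le_rfl
  · rw [setLIntegral_const, ENNReal.inv_mul_cancel hA₀ hA]
    exact_mod_cast le_max_left 1 E
  · exact hess.mono fun x hx => hx.1.trans (le_mul_of_one_le_left' (mod_cast le_max_left 1 E))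
  · rw [ENNReal.mul_inv_cancel hA₀ hA, mul_one]
    exact hess.mono fun x hx => hx.2

lemma exists_isScale_of_volume_le_one (hψ : IsWeakPhi univ ψ) (h1 : A1 φ)
    (hinv : FracInvRel α φ ψ) :
    ∃ C : ℝ≥0, ∀ Q : Cube n, volume Q.set ≤ 1 → ∃ S U, IsScale ψ C Q.set S U := by
  obtain ⟨β, hβ, -, h1⟩ := h1
  obtain ⟨K, hK⟩ := hinv.exists_phiInv_le
  refine ⟨_, fun Q hQ => exists_isScale_of_ae_le (E := K * β⁻¹) hψ Q.volume_ne_zero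
    Q.volume_ne_top ?_⟩
  filter_upwards [h1 Q hQ] with x hx
  filter_upwards [hx] with y hxy
  have ht : (volume Q.set)⁻¹ ≠ ∞ := ENNReal.inv_ne_top.2 Q.volume_ne_zero
  have ht₁ : 1 ≤ (volume Q.set)⁻¹ := ENNReal.one_le_inv.2 hQ
  have hφ_le : phiInv φ x (volume Q.set)⁻¹ ≤ (β⁻¹ : ℝ≥0) * phiInv φ y (volume Q.set)⁻¹ := by
    rw [ENNReal.coe_inv hβ.ne', ← ENNReal.inv_mul_le_iff (by simp) (by simpa using hβ.ne'), inv_inv]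
    exact hxy _ ht₁ le_rfl
  rw [← ENNReal.coe_toNNReal ht] at hφ_le ⊢
  exact hK x y _ _ (ENNReal.toNNReal_pos (one_pos.trans_le ht₁).ne' ht) hφ_le

lemma isScale_of_phiInv_comparable (hψ : IsWeakPhi univ ψ) {L I t : ℝ≥0} {x₀ : RSp n}
    (hL : 0 < L) (hsup : AlmostSuperlinear L (ψ x₀)) (ht₀ : 0 < t) (ht : (t : ℝ≥0∞) = (volume A)⁻¹)
    (hU : ∀ x, t ≤ U x) (hint : ∫⁻ x in A, U x ≤ I)
    (hle : ∀ᵐ x ∂volume.restrict A, phiInv ψ x₀ (U x) ≤ E * phiInv ψ x (U x))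
    (hge : ∀ᵐ x ∂volume.restrict A, phiInv ψ x (U x) ≤ E * phiInv ψ x₀ (U x)) :
    IsScale ψ (max I (max E (E * L))) A (phiInv ψ x₀ t).toNNReal U := by
  have hS : phiInv ψ x₀ t ≠ ∞ := (hψ.phiInv_lt_top (mem_univ x₀) ENNReal.coe_lt_top).ne
  have hS₀ : phiInv ψ x₀ t ≠ 0 := (hψ.phiInv_pos (mem_univ x₀) (ENNReal.coe_pos.2 ht₀)).ne'
  refine ⟨ENNReal.toNNReal_pos hS₀ hS, fun x => ht ▸ ENNReal.coe_le_coe.2 (hU x),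
    hint.trans (mod_cast le_max_left _ _), hle.mono fun x hx => ?_, hge.mono fun x hx => ?_⟩ <;>
    rw [ENNReal.coe_toNNReal hS]
  · calc phiInv ψ x₀ t ≤ phiInv ψ x₀ (U x) := monotone_phiInv (mod_cast hU x)
      _ ≤ E * phiInv ψ x (U x) := hx
      _ ≤ _ := by
          gcongr
          exact (le_max_left E _).trans (le_max_right _ _)
  · have hvol : (U x / t : ℝ≥0) = volume A * U x := by
      rw [ENNReal.coe_div ht₀.ne', ht, div_eq_mul_inv, inv_inv, mul_comm]
    calc phiInv ψ x (U x) ≤ E * phiInv ψ x₀ (U x) := hx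
      _ = E * phiInv ψ x₀ ((U x / t : ℝ≥0) * t) := by
          rw [← ENNReal.coe_mul, div_mul_cancel₀ _ ht₀.ne']
      _ ≤ E * ((L * (U x / t) : ℝ≥0) * phiInv ψ x₀ t) := by
          gcongr
          exact hsup.phiInv_mul_le hL ((one_le_div ht₀).2 (hU x)) _
      _ = (E * L : ℝ≥0) * (volume A * U x) * phiInv ψ x₀ t := by
          rw [← hvol]; push_cast; ring
      _ ≤ _ := by
          gcongr
          exact (le_max_right _ _).trans (le_max_right _ _)

lemma PhiInvComparableAbove.exists_isScale_of_one_le_volume {h : RSp n → ℝ≥0}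
    (hcmp : PhiInvComparableAbove ψ h E) (hψ : IsWeakPhi univ ψ) (hn : 0 < n)
    (hh : ∀ x, h x ≤ 1) (hfin : ∫⁻ x, h x < ∞) :
    ∃ C : ℝ≥0, ∀ A : Set (RSp n), 1 ≤ volume A → volume A ≠ ∞ → ∃ S U, IsScale ψ C A S U := by
  obtain ⟨L, hL, hsup⟩ := hψ.exists_almostSuperlinear
  obtain ⟨s, hs, hcmp⟩ := hcmp
  lift ∫⁻ x, h x to ℝ≥0 using hfin.ne with I hI
  refine ⟨max (1 + I) (max E (E * L)), fun A hA₁ hA => ?_⟩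
  have hA₀ : volume A ≠ 0 := (one_pos.trans_le hA₁).ne'
  obtain ⟨t, ht⟩ : ∃ t : ℝ≥0, (t : ℝ≥0∞) = (volume A)⁻¹ :=
    ⟨_, ENNReal.coe_toNNReal (ENNReal.inv_ne_top.2 hA₀)⟩
  have ht₀ : 0 < t := ENNReal.coe_pos.1 (ht ▸ ENNReal.inv_pos.2 hA)
  have ht₁ : t ≤ 1 := ENNReal.coe_le_coe.1 (ht ▸ ENNReal.inv_le_one.2 hA₁)
  have : Nonempty (Fin n) := Fin.pos_iff_nonempty.1 hn
  have : NoncompactSpace (RSp n) := NormedSpace.noncompactSpace ℝ _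
  obtain ⟨x₀, hx₀, hx₀t⟩ := exists_mem_le_of_lintegral_lt_top (f := fun x => h x)
    (measure_univ_of_isAddLeftInvariant volume) (hI ▸ ENNReal.coe_lt_top) (ENNReal.coe_pos.2 ht₀) hs
  have hx₀t : h x₀ ≤ t := mod_cast hx₀t
  have hU₁ : ∀ x, max t (h x) ≤ 1 := fun x => max_le ht₁ (hh x)
  have hU₀ : ∀ x, 0 < max t (h x) := fun x => ht₀.trans_le (le_max_left _ _)
  have hint : ∫⁻ x in A, (max t (h x) : ℝ≥0) ≤ (1 + I : ℝ≥0) := by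
    calc ∫⁻ x in A, (max t (h x) : ℝ≥0) ≤ ∫⁻ x in A, (t + h x : ℝ≥0) :=
          lintegral_mono fun x => ENNReal.coe_le_coe.2 (max_le_add_of_nonneg t.2 (h x).2)
      _ ≤ (1 + I : ℝ≥0) := by
          simp only [ENNReal.coe_add]
          rw [lintegral_add_left measurable_const, setLIntegral_const, ht,
            ENNReal.inv_mul_cancel hA₀ hA, ENNReal.coe_one, hI]
          exact add_le_add_right (setLIntegral_le_lintegral _ _) _
  exact ⟨_, _, isScale_of_phiInv_comparable hψ (one_pos.trans_le hL) (hsup x₀ (mem_univ x₀)) ht₀ ht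
    (fun x => le_max_left t (h x)) hint
    (ae_restrict_of_ae (mem_of_superset hs fun x hx =>
      hcmp x₀ hx₀ x hx _ (hU₀ x) (hU₁ x) (hx₀t.trans (le_max_left _ _)) (le_max_right _ _)))
    (ae_restrict_of_ae (mem_of_superset hs fun x hx =>
      hcmp x hx x₀ hx₀ _ (hU₀ x) (hU₁ x) (le_max_right _ _) (hx₀t.trans (le_max_left _ _))))⟩

lemma exists_isScale (hn : 0 < n) (hφ : IsWeakPhi univ φ) (hψ : IsWeakPhi univ ψ)
    (hinv : FracInvRel α φ ψ) (h0 : A0 univ φ) (h1 : A1 φ) (h2 : A2 φ) :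
    ∃ C : ℝ≥0, ∀ Q : Cube n, ∃ S U, IsScale ψ C Q.set S U := by
  obtain ⟨h, hh, hfin, C, hcmp⟩ := exists_phiInvComparableAbove hφ h0 h2
  obtain ⟨C', hcmp⟩ := hcmp.exists_of_fracInvRel hinv
  obtain ⟨Cs, hsmall⟩ := exists_isScale_of_volume_le_one hψ h1 hinv
  obtain ⟨Cl, hlarge⟩ := hcmp.exists_isScale_of_one_le_volume hψ hn hh hfin
  refine ⟨max Cs Cl, fun Q => ?_⟩
  rcases le_total (volume Q.set) 1 with hQ | hQ
  · obtain ⟨S, U, hSU⟩ := hsmall Q hQ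
    exact ⟨S, U, hSU.mono (le_max_left _ _)⟩
  · obtain ⟨S, U, hSU⟩ := hlarge Q.set hQ Q.volume_ne_top
    exact ⟨S, U, hSU.mono (le_max_right _ _)⟩

end Scale

section LuxemburgNorm

variable {n : ℕ} {Ω A : Set (RSp n)} {α : ℝ} {φ ψ : RSp n → ℝ≥0 → ℝ≥0∞} {f g : RSp n → ℝ}
  {L k lam : ℝ≥0}

lemma orliczNorm_le (hlam : 0 < lam) (h : ∫⁻ x in Ω, φ x (‖f x‖₊ / lam) ≤ 1) :
    orliczNorm φ Ω f ≤ lam :=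
  sInf_le ⟨lam, ⟨hlam, h⟩, rfl⟩

lemma le_mul_orliczNorm {a c : ℝ≥0∞} (hc₀ : c ≠ 0) (hc : c ≠ ∞)
    (h : ∀ lam : ℝ≥0, 0 < lam → ∫⁻ x in Ω, φ x (‖f x‖₊ / lam) ≤ 1 → a ≤ c * lam) :
    a ≤ c * orliczNorm φ Ω f := by
  refine (ENNReal.inv_mul_le_iff hc₀ hc).1 (le_sInf ?_)
  rintro _ ⟨lam, ⟨hlam, hle⟩, rfl⟩
  exact (ENNReal.inv_mul_le_iff hc₀ hc).2 (h lam hlam hle)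

lemma orliczNorm_le_of_lintegral_le (hsup : ∀ x, AlmostSuperlinear L (φ x)) (hL : 0 < L)
    (hk : 1 ≤ k) (hlam : 0 < lam) (h : ∫⁻ x in Ω, φ x (‖f x‖₊ / lam) ≤ k) :
    orliczNorm φ Ω f ≤ (L * k * lam : ℝ≥0) := by
  have hk₀ : 0 < k := one_pos.trans_le hk
  have hkk : (k : ℝ≥0∞) ≠ 0 := ENNReal.coe_ne_zero.2 hk₀.ne'
  refine orliczNorm_le (by positivity) ?_
  rw [← ENNReal.mul_le_mul_iff_right hkk ENNReal.coe_ne_top, mul_one,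
    ← lintegral_const_mul' _ _ ENNReal.coe_ne_top]
  refine (lintegral_mono fun x => (hsup x k hk _).trans_eq ?_).trans h
  congr 1
  field_simp

lemma orliczNorm_mono (hφ : ∀ x, Monotone (φ x))
    (h : ∀ᵐ x ∂volume.restrict Ω, ‖f x‖₊ ≤ ‖g x‖₊) : orliczNorm φ Ω f ≤ orliczNorm φ Ω g := by
  refine le_sInf ?_
  rintro _ ⟨lam, ⟨hlam, hle⟩, rfl⟩
  exact orliczNorm_le hlam ((lintegral_mono_ae (h.mono fun x hx => hφ x (by gcongr))).trans hle)

lemma orliczNorm_const_mul_le {c : ℝ} (hc : c ≠ 0) :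
    orliczNorm φ Ω (fun x => c * f x) ≤ ‖c‖ₑ * orliczNorm φ Ω f := by
  have hc₀ : 0 < ‖c‖₊ := nnnorm_pos.2 hc
  refine le_mul_orliczNorm (enorm_ne_zero.2 hc) enorm_ne_top fun lam hlam hle => ?_
  refine (orliczNorm_le (lam := ‖c‖₊ * lam) (by positivity) ?_).trans_eq (ENNReal.coe_mul _ _)
  simpa only [nnnorm_mul, mul_div_mul_left _ _ hc₀.ne'] using hle

lemma lintegral_comp_nnnorm_indicator_one (hA : MeasurableSet A) {F : RSp n → ℝ≥0 → ℝ≥0∞}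
    (hF : ∀ x, F x 0 = 0) :
    ∫⁻ x, F x ‖A.indicator (1 : RSp n → ℝ) x‖₊ = ∫⁻ x in A, F x 1 := by
  rw [← lintegral_indicator hA]
  congr 1 with x
  by_cases hx : x ∈ A <;> simp [hx, hF]

lemma IsWeakPhi.aemeasurable_comp (hφ : IsWeakPhi Ω φ) {g : RSp n → ℝ≥0}
    (hg : AEMeasurable g (volume.restrict Ω)) :
    AEMeasurable (fun x => φ x (g x)) (volume.restrict Ω) :=
  (hφ.meas _ hg.measurable_mk).congr (hg.ae_eq_mk.mono fun _ hx => congrArg _ hx.symm)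

lemma memOrlicz_indicator_one (hφ : IsWeakPhi univ φ) (h0 : A0 univ φ) (hA : MeasurableSet A)
    (hAtop : volume A ≠ ∞) : MemOrlicz φ univ (A.indicator 1) := by
  obtain ⟨β, hβ, -, h0⟩ := h0
  refine ⟨(measurable_one.indicator hA).aemeasurable, β / 2, half_pos hβ, ?_⟩
  rw [Measure.restrict_univ] at h0 ⊢
  rw [lintegral_comp_nnnorm_indicator_one hA (F := fun x s => φ x (β / 2 * s))
    fun x => by simp [hφ.zero x (mem_univ x)]]
  calc ∫⁻ x in A, φ x (β / 2 * 1) ≤ ∫⁻ _ in A, 1 := by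
        refine lintegral_mono_ae (ae_restrict_of_ae (h0.mono fun x hx => ?_))
        refine (lt_of_lt_phiInv (lt_of_lt_of_le ?_ hx.1)).le
        exact_mod_cast (mul_one (β / 2)).trans_lt (half_lt_self hβ)
    _ < ∞ := by simpa using hAtop.lt_top

lemma lintegral_comp_indicator_one_le {V a c lam : ℝ≥0} (hφ : ∀ x, φ x 0 = 0) (hψ : ∀ x, ψ x 0 = 0)
    (hA : MeasurableSet A) (hV : 0 < V) (hAV : volume A = V)
    (hle : ∀ x, φ x (c * (a * lam⁻¹)) ≤ ψ x lam⁻¹ + (V⁻¹ : ℝ≥0))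
    (hlam : ∫⁻ x, ψ x (‖A.indicator (1 : RSp n → ℝ) x‖₊ / lam) ≤ 1) :
    ∫⁻ x, φ x (‖A.indicator (1 : RSp n → ℝ) x‖₊ / (a⁻¹ / c * lam)) ≤ (2 : ℝ≥0) := by
  rw [lintegral_comp_nnnorm_indicator_one hA (F := fun x s => ψ x (s / lam))
    fun x => by simp [hψ x]] at hlam
  rw [lintegral_comp_nnnorm_indicator_one hA (F := fun x s => φ x (s / _)) fun x => by simp [hφ x]]
  have harg : 1 / (a⁻¹ / c * lam) = c * (a * lam⁻¹) := by
    rw [one_div, mul_inv, inv_div, div_inv_eq_mul, mul_assoc]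
  calc ∫⁻ x in A, φ x (1 / (a⁻¹ / c * lam)) ≤ ∫⁻ x in A, (ψ x (1 / lam) + (V⁻¹ : ℝ≥0)) :=
        lintegral_mono fun x => by simpa only [harg, one_div] using hle x
    _ ≤ 1 + 1 := by
        rw [lintegral_add_right _ measurable_const, setLIntegral_const, hAV, ← ENNReal.coe_mul,
          inv_mul_cancel₀ hV.ne', ENNReal.coe_one]
        gcongr
    _ = (2 : ℝ≥0) := by norm_num

lemma FracInvRel.exists_orliczNorm_indicator_one_le (hinv : FracInvRel α φ ψ) (hα : 0 ≤ α)
    (hφ : IsWeakPhi univ φ) (hψ : IsWeakPhi univ ψ) :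
    ∃ C : ℝ≥0, ∀ A : Set (RSp n), MeasurableSet A → volume A ≠ 0 → volume A ≠ ∞ →
      orliczNorm φ univ (A.indicator 1) ≤
        C * volume A ^ (α / (n : ℝ)) * orliczNorm ψ univ (A.indicator 1) := by
  obtain ⟨c, hc, hle⟩ := hinv.exists_comp_mul_le_add hα hφ hψ
  obtain ⟨L, hL, hsup⟩ := hφ.exists_almostSuperlinear
  have hL₀ : 0 < L := one_pos.trans_le hL
  refine ⟨L * 2 / c, fun A hA hA₀ hAtop => ?_⟩
  lift volume A to ℝ≥0 using hAtop with V hV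
  have hV₀ : 0 < V := pos_iff_ne_zero.2 (ENNReal.coe_ne_zero.1 hA₀)
  have : 0 < V ^ (α / (n : ℝ)) := NNReal.rpow_pos hV₀
  rw [← ENNReal.coe_rpow_of_ne_zero hV₀.ne', ← ENNReal.coe_mul]
  refine le_mul_orliczNorm (ENNReal.coe_ne_zero.2 (by positivity)) ENNReal.coe_ne_top
    fun lam hlam hlam_le => ?_
  rw [Measure.restrict_univ] at hlam_le
  have hint := lintegral_comp_indicator_one_le (fun x => hφ.zero x (mem_univ x))
    (fun x => hψ.zero x (mem_univ x)) hA hV₀ hV.symm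
    (fun x => hle x _ lam⁻¹ (inv_pos.2 hV₀)) hlam_le
  rw [NNReal.inv_rpow, inv_inv, ← Measure.restrict_univ (μ := volume)] at hint
  refine (orliczNorm_le_of_lintegral_le (fun x => hsup x (mem_univ x)) hL₀ one_le_two
    (by positivity) hint).trans_eq ?_
  rw [← ENNReal.coe_mul]
  congr 1
  ring

end LuxemburgNorm

section Averages

variable {n : ℕ} {A : Set (RSp n)} {ψ : RSp n → ℝ≥0 → ℝ≥0∞} {C L S : ℝ≥0} {U : RSp n → ℝ≥0}

lemma IsScale.one_le (h : IsScale ψ C A S U) (hA₀ : volume A ≠ 0) (hA : volume A ≠ ∞) :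
    1 ≤ C := by
  have : (1 : ℝ≥0∞) ≤ C := calc
    (1 : ℝ≥0∞) = ∫⁻ _ in A, (volume A)⁻¹ := by
      rw [setLIntegral_const, ENNReal.inv_mul_cancel hA₀ hA]
    _ ≤ ∫⁻ x in A, U x := lintegral_mono h.inv_volume_le
    _ ≤ C := h.lintegral_le
  exact_mod_cast this

lemma IsScale.orliczNorm_indicator_one_le (h : IsScale ψ C A S U) (hψ : IsWeakPhi univ ψ)
    (hL : 0 < L) (hsup : ∀ x, AlmostSuperlinear L (ψ x)) (hA : MeasurableSet A)
    (hA₀ : volume A ≠ 0) (hAtop : volume A ≠ ∞) :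
    orliczNorm ψ univ (A.indicator 1) ≤ (L * C * (2 * C / S) : ℝ≥0) := by
  have hC := h.one_le hA₀ hAtop
  have hC₀ : 0 < C := one_pos.trans_le hC
  have hS := h.pos
  refine orliczNorm_le_of_lintegral_le hsup hL hC (by positivity) ?_
  rw [Measure.restrict_univ, lintegral_comp_nnnorm_indicator_one hA
    (F := fun x s => ψ x (s / (2 * C / S))) fun x => by simp [hψ.zero x (mem_univ x)]]
  refine (lintegral_mono_ae (h.le_phiInv.mono fun x hx => ?_)).trans h.lintegral_le
  refine (lt_of_lt_phiInv ?_).le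
  rw [← ENNReal.mul_lt_mul_iff_right (ENNReal.coe_ne_zero.2 hC₀.ne') ENNReal.coe_ne_top]
  refine lt_of_lt_of_le ?_ hx
  rw [← ENNReal.coe_mul, ENNReal.coe_lt_coe]
  calc C * (1 / (2 * C / S)) = S / 2 := by field_simp
    _ < S := half_lt_self hS

lemma div_le_comp_add {V u g : ℝ≥0} {x : RSp n} (hψ : Monotone (ψ x)) (hL : 0 < L)
    (hsup : AlmostSuperlinear L (ψ x)) (hC : 0 < C) (hS : 0 < S) (hV : 0 < V) (hu : 0 < u)
    (h : phiInv ψ x u ≤ (C * (V * u) * S : ℝ≥0)) :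
    ((g / V : ℝ≥0) : ℝ≥0∞) ≤ ψ x (2 * L * C * S * g) + u := by
  rcases le_total (g / V) u with hgu | hgu
  · exact le_add_left (mod_cast hgu)
  have hg : 0 < g := by
    rcases eq_zero_or_pos g with rfl | hg
    · exact absurd hgu (by simpa using hu.ne')
    · exact hg
  refine le_add_right (le_of_not_gt fun hlt => ?_)
  have hge := le_phiInv_of_lt hψ hlt
  have hle : phiInv ψ x (g / V : ℝ≥0) ≤ (L * C * S * g : ℝ≥0) := calc
    phiInv ψ x (g / V : ℝ≥0) = phiInv ψ x ((g / V / u : ℝ≥0) * u) := by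
      rw [← ENNReal.coe_mul, div_mul_cancel₀ _ hu.ne']
    _ ≤ (L * (g / V / u) : ℝ≥0) * phiInv ψ x u :=
      hsup.phiInv_mul_le hL ((one_le_div hu).2 hgu) _
    _ ≤ (L * (g / V / u) : ℝ≥0) * (C * (V * u) * S : ℝ≥0) := by gcongr
    _ = (L * C * S * g : ℝ≥0) := by
      rw [← ENNReal.coe_mul]
      congr 1
      field_simp
  have : 2 * L * C * S * g ≤ L * C * S * g := by exact_mod_cast hge.trans hle
  have hpos : 0 < L * C * S * g := by positivity
  exact this.not_gt (by simpa only [mul_assoc] using lt_mul_of_one_lt_left hpos one_lt_two)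

lemma IsScale.inv_volume_mul_lintegral_le (h : IsScale ψ C A S U) (hψ : IsWeakPhi univ ψ)
    (hL : 0 < L) (hsup : ∀ x, AlmostSuperlinear L (ψ x)) (hA₀ : volume A ≠ 0)
    (hAtop : volume A ≠ ∞) {f : RSp n → ℝ} (hf : AEMeasurable f) :
    (volume A)⁻¹ * ∫⁻ x in A, ‖f x‖ₑ ≤
      ((1 + C) * (2 * L * C * S) : ℝ≥0) * orliczNorm ψ univ f := by
  have hC : 0 < C := one_pos.trans_le (h.one_le hA₀ hAtop)
  have hS := h.pos
  have hU := h.inv_volume_le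
  have hphi := h.phiInv_le
  lift volume A to ℝ≥0 using hAtop with V hV
  have hV₀ : 0 < V := pos_iff_ne_zero.2 (ENNReal.coe_ne_zero.1 hA₀)
  rw [← ENNReal.coe_inv hV₀.ne'] at hU ⊢
  refine le_mul_orliczNorm (ENNReal.coe_ne_zero.2 (by positivity)) ENNReal.coe_ne_top
    fun lam hlam hlam_le => ?_
  have hpoint : ∀ᵐ x ∂volume.restrict A,
      V⁻¹ * ‖f x‖ₑ ≤ (2 * L * C * S * lam : ℝ≥0) * (ψ x (‖f x‖₊ / lam) + U x) := by
    filter_upwards [hphi] with x hx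
    have hg := div_le_comp_add (g := ‖f x‖₊ / (2 * L * C * S * lam))
      (hψ.mono x (mem_univ x)) hL (hsup x) hC hS hV₀
      ((inv_pos.2 hV₀).trans_le (ENNReal.coe_le_coe.1 (hU x))) (mod_cast hx)
    rw [show 2 * L * C * S * (‖f x‖₊ / (2 * L * C * S * lam)) = ‖f x‖₊ / lam by field_simp] at hg
    refine le_of_eq_of_le ?_ (mul_le_mul_right hg _)
    rw [enorm_eq_nnnorm, ← ENNReal.coe_mul, ← ENNReal.coe_mul]
    congr 1
    field_simp
  have hmeas : AEMeasurable (fun x => ψ x (‖f x‖₊ / lam)) (volume.restrict A) :=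
    (hψ.aemeasurable_comp (hf.restrict.nnnorm.div_const lam)).mono_measure
      (Measure.restrict_mono_set _ (subset_univ A))
  calc V⁻¹ * ∫⁻ x in A, ‖f x‖ₑ
      ≤ (2 * L * C * S * lam : ℝ≥0) * ∫⁻ x in A, (ψ x (‖f x‖₊ / lam) + U x) := by
        rw [← lintegral_const_mul' _ _ ENNReal.coe_ne_top,
          ← lintegral_const_mul' _ _ ENNReal.coe_ne_top]
        exact lintegral_mono_ae hpoint
    _ ≤ (2 * L * C * S * lam : ℝ≥0) * (1 + C) := by
        rw [lintegral_add_left' hmeas]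
        gcongr
        · exact (lintegral_mono_set (subset_univ A)).trans hlam_le
        · exact h.lintegral_le
    _ = ((1 + C) * (2 * L * C * S) : ℝ≥0) * lam := by push_cast; ring

lemma exists_inv_volume_mul_lintegral_le (hψ : IsWeakPhi univ ψ)
    (hscale : ∀ Q : Cube n, ∃ S U, IsScale ψ C Q.set S U) :
    ∃ C' : ℝ≥0, ∀ (Q : Cube n) (f : RSp n → ℝ) (K : ℝ≥0), AEMeasurable f →
      orliczNorm ψ univ f ≤ K * orliczNorm ψ univ (cubeIndicator Q) →
      (volume Q.set)⁻¹ * ∫⁻ x in Q.set, ‖f x‖ₑ ≤ C' * K := by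
  obtain ⟨L, hL, hsup⟩ := hψ.exists_almostSuperlinear
  have hL₀ : 0 < L := one_pos.trans_le hL
  have hsup' := fun x => hsup x (mem_univ x)
  refine ⟨(1 + C) * (2 * L * C) * (L * C * (2 * C)), fun Q f K hf hfK => ?_⟩
  obtain ⟨S, U, hSU⟩ := hscale Q
  calc (volume Q.set)⁻¹ * ∫⁻ x in Q.set, ‖f x‖ₑ
      ≤ ((1 + C) * (2 * L * C * S) : ℝ≥0) * orliczNorm ψ univ f :=
        hSU.inv_volume_mul_lintegral_le hψ hL₀ hsup' Q.volume_ne_zero Q.volume_ne_top hf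
    _ ≤ ((1 + C) * (2 * L * C * S) : ℝ≥0) * (K * (L * C * (2 * C / S) : ℝ≥0)) := by
        grw [hfK, cubeIndicator, hSU.orliczNorm_indicator_one_le hψ hL₀ hsup' Q.measurableSet
          Q.volume_ne_zero Q.volume_ne_top]
    _ = ((1 + C) * (2 * L * C) * (L * C * (2 * C)) : ℝ≥0) * K := by
        have hS := hSU.pos
        simp only [← ENNReal.coe_mul]
        congr 1
        field_simp

end Averages

section FractionalMaximal

variable {n : ℕ} {α : ℝ} {b : RSp n → ℝ} {x : RSp n}

lemma exists_center_inter_subset_subset (c₀ c : ℝ) {r₀ r : ℝ} (hr : r ≤ r₀) :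
    ∃ c', (∀ y, |y - c| ≤ r → |y - c₀| ≤ r₀ → |y - c'| ≤ r) ∧
      ∀ y, |y - c'| ≤ r → |y - c₀| ≤ r₀ := by
  simp only [abs_sub_le_iff]
  refine ⟨max (c₀ - (r₀ - r)) (min c (c₀ + (r₀ - r))), fun y => ?_, fun y => ?_⟩ <;> grind

lemma Cube.exists_inter_subset_subset (Q₀ Q : Cube n) :
    ∃ Q' : Cube n, Q.set ∩ Q₀.set ⊆ Q'.set ∧ Q'.set ⊆ Q₀.set ∧ volume Q'.set ≤ volume Q.set := by
  rcases le_total Q₀.r Q.r with hr | hr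
  · refine ⟨Q₀, inter_subset_right, Subset.rfl, ?_⟩
    rw [volume_set, volume_set]
    gcongr
  · choose c hc hc' using fun i => exists_center_inter_subset_subset (Q₀.c i) (Q.c i) hr
    refine ⟨⟨WithLp.toLp 2 c, Q.r, Q.r_pos⟩, fun y hy i => hc i _ (hy.1 i) (hy.2 i),
      fun y hy i => hc' i _ (hy i), ?_⟩
    rw [volume_set, volume_set]

lemma ennreal_rpow_le_rpow_of_nonpos {u v : ℝ≥0∞} {z : ℝ} (hz : z ≤ 0) (huv : u ≤ v) :
    v ^ z ≤ u ^ z := by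
  rw [← ENNReal.inv_le_inv, ← ENNReal.rpow_neg, ← ENNReal.rpow_neg]
  exact ENNReal.rpow_le_rpow huv (neg_nonneg.2 hz)

lemma Cube.volume_rpow_sub_one_mul (Q : Cube n) (a : ℝ) :
    volume Q.set ^ (a - 1) * volume Q.set = volume Q.set ^ a := by
  rw [ENNReal.rpow_sub _ _ Q.volume_ne_zero Q.volume_ne_top, ENNReal.rpow_one,
    ENNReal.div_mul_cancel Q.volume_ne_zero Q.volume_ne_top]

lemma setLIntegral_nnnorm_mul_cubeIndicator (Q : Cube n) (b : RSp n → ℝ) (s : Set (RSp n)) :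
    ∫⁻ y in s, ‖b y * cubeIndicator Q y‖₊ = ∫⁻ y in s ∩ Q.set, ‖b y‖₊ := by
  rw [inter_comm, ← setLIntegral_indicator Q.measurableSet]
  congr 1 with y
  by_cases hy : y ∈ Q.set <;> simp [cubeIndicator, hy]

lemma fracMaximal_mul_cubeIndicator (hα : α ≤ n) (Q : Cube n) (b : RSp n → ℝ) (hx : x ∈ Q.set) :
    fracMaximal α (fun y => b y * cubeIndicator Q y) x = restFracMaximal α Q b x := by
  have ha : α / (n : ℝ) - 1 ≤ 0 := sub_nonpos.2 (div_le_one_of_le₀ hα n.cast_nonneg)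
  simp only [fracMaximal, restFracMaximal, setLIntegral_nnnorm_mul_cubeIndicator]
  refine le_antisymm (iSup₂_le fun P hxP => ?_) (iSup₂_le fun P hxP => iSup_le fun hPQ => ?_)
  · obtain ⟨P', hPP', hP'Q, hvol⟩ := Q.exists_inter_subset_subset P
    refine le_trans ?_ (le_iSup₂_of_le P' (hPP' ⟨hxP, hx⟩) (le_iSup_of_le hP'Q le_rfl))
    gcongr ?_ * ?_
    · exact ennreal_rpow_le_rpow_of_nonpos ha hvol
    · exact lintegral_mono_set hPP'
  · refine le_trans ?_ (le_iSup₂_of_le P hxP le_rfl)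
    rw [inter_eq_left.2 hPQ]

lemma fracMaximal_cubeIndicator (hα₀ : 0 ≤ α) (hα : α ≤ n) (Q : Cube n) (hx : x ∈ Q.set) :
    fracMaximal α (cubeIndicator Q) x = volume Q.set ^ (α / (n : ℝ)) := by
  have : 0 ≤ α / (n : ℝ) := div_nonneg hα₀ n.cast_nonneg
  have h := fracMaximal_mul_cubeIndicator hα Q (fun _ => 1) hx
  simp only [one_mul, restFracMaximal, nnnorm_one, ENNReal.coe_one, setLIntegral_one,
    Cube.volume_rpow_sub_one_mul] at h
  refine h.trans (le_antisymm (iSup₂_le fun P _ => iSup_le fun hPQ => ?_)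
    (le_iSup₂_of_le Q hx (le_iSup_of_le Subset.rfl le_rfl)))
  gcongr

lemma commTestFn_of_mem (hα₀ : 0 ≤ α) (hα : α ≤ n) (Q : Cube n) (b : RSp n → ℝ)
    (hx : x ∈ Q.set) :
    commTestFn α Q b x = -(volume Q.set ^ (-(α / (n : ℝ)))).toReal *
      fracMaximalCommutator α b (cubeIndicator Q) x := by
  have hinv : (volume Q.set ^ (-(α / (n : ℝ)))).toReal * (volume Q.set ^ (α / (n : ℝ))).toReal
      = 1 := by
    rw [← ENNReal.toReal_mul, ← ENNReal.rpow_add _ _ Q.volume_ne_zero Q.volume_ne_top,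
      neg_add_cancel, ENNReal.rpow_zero, ENNReal.toReal_one]
  rw [commTestFn, indicator_of_mem hx, fracMaximalCommutator,
    fracMaximal_mul_cubeIndicator hα Q b hx, fracMaximal_cubeIndicator hα₀ hα Q hx]
  linear_combination -b x * hinv

lemma enorm_toReal_volume_rpow_neg (Q : Cube n) (a : ℝ) :
    ‖-(volume Q.set ^ (-a)).toReal‖ₑ = volume Q.set ^ (-a) := by
  rw [enorm_neg, Real.enorm_of_nonneg ENNReal.toReal_nonneg,
    ENNReal.ofReal_toReal (ENNReal.rpow_ne_top_of_ne_zero Q.volume_ne_zero Q.volume_ne_top)]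

lemma exists_orliczNorm_commTestFn_le {φ ψ : RSp n → ℝ≥0 → ℝ≥0∞} (hα₀ : 0 ≤ α) (hα : α ≤ n)
    (hφ : IsWeakPhi univ φ) (hψ : IsWeakPhi univ ψ) (hinv : FracInvRel α φ ψ) (h0 : A0 univ φ)
    (hbound : ∃ C : ℝ≥0, ∀ f : RSp n → ℝ, MemOrlicz φ univ f →
      orliczNorm ψ univ (fracMaximalCommutator α b f) ≤ C * orliczNorm φ univ f) :
    ∃ C : ℝ≥0, ∀ Q : Cube n,
      orliczNorm ψ univ (commTestFn α Q b) ≤ C * orliczNorm ψ univ (cubeIndicator Q) := by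
  obtain ⟨B, hB⟩ := hbound
  obtain ⟨C, hC⟩ := hinv.exists_orliczNorm_indicator_one_le hα₀ hφ hψ
  refine ⟨B * C, fun Q => ?_⟩
  set a := α / (n : ℝ)
  have hne : -(volume Q.set ^ (-a)).toReal ≠ 0 := by
    rw [← enorm_ne_zero, enorm_toReal_volume_rpow_neg]
    exact (ENNReal.rpow_pos (pos_iff_ne_zero.2 Q.volume_ne_zero) Q.volume_ne_top).ne'
  calc orliczNorm ψ univ (commTestFn α Q b)
      ≤ orliczNorm ψ univ fun x =>
          -(volume Q.set ^ (-a)).toReal * fracMaximalCommutator α b (cubeIndicator Q) x := by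
        refine orliczNorm_mono (fun x => hψ.mono x (mem_univ x)) (ae_of_all _ fun x => ?_)
        by_cases hx : x ∈ Q.set
        · rw [commTestFn_of_mem hα₀ hα Q b hx]
        · simp [commTestFn, hx]
    _ ≤ volume Q.set ^ (-a) * orliczNorm ψ univ (fracMaximalCommutator α b (cubeIndicator Q)) :=
        (orliczNorm_const_mul_le hne).trans_eq (by rw [enorm_toReal_volume_rpow_neg])
    _ ≤ volume Q.set ^ (-a) *
          (B * (C * volume Q.set ^ a * orliczNorm ψ univ (cubeIndicator Q))) := by
        gcongr
        refine (hB _ (memOrlicz_indicator_one hφ h0 Q.measurableSet Q.volume_ne_top)).trans ?_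
        gcongr
        exact hC Q.set Q.measurableSet Q.volume_ne_zero Q.volume_ne_top
    _ = (volume Q.set ^ (-a) * volume Q.set ^ a) *
          ((B * C : ℝ≥0) * orliczNorm ψ univ (cubeIndicator Q)) := by
        push_cast; ring
    _ = (B * C : ℝ≥0) * orliczNorm ψ univ (cubeIndicator Q) := by
        rw [← ENNReal.rpow_add _ _ Q.volume_ne_zero Q.volume_ne_top, neg_add_cancel,
          ENNReal.rpow_zero, one_mul]

end FractionalMaximal

section Finiteness

lemma ae_exists_lintegral_closedBall_le {X : Type*} [MetricSpace X] [MeasurableSpace X]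
    [BorelSpace X] [SecondCountableTopology X] [HasBesicovitchCovering X] {μ : Measure X}
    [IsLocallyFiniteMeasure μ] [μ.IsOpenPosMeasure] {f : X → ℝ≥0∞} (hf : AEMeasurable f μ)
    (hint : ∫⁻ x, f x ∂μ ≠ ∞) :
    ∀ᵐ x ∂μ, ∃ M : ℝ≥0, ∀ r : ℝ, 0 < r →
      ∫⁻ y in Metric.closedBall x r, f y ∂μ ≤ M * μ (Metric.closedBall x r) := by
  filter_upwards [(Besicovitch.vitaliFamily μ).ae_tendsto_lintegral_div hf hint,
    ae_lt_top' hf hint] with x hx hfx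
  obtain ⟨K, hfK, hK⟩ := exists_between hfx
  lift K to ℝ≥0 using hK.ne
  obtain ⟨δ, hδ, hδK⟩ := mem_nhdsGT_iff_exists_Ioc_subset.1
    ((hx.comp (Besicovitch.tendsto_filterAt μ x)).eventually_le_const hfK)
  have hball : ∀ r : ℝ, 0 < r → μ (Metric.closedBall x r) ≠ 0 := fun r hr =>
    (Metric.measure_closedBall_pos μ x hr).ne'
  set M : ℝ≥0 := max K ((∫⁻ y, f y ∂μ) / μ (Metric.closedBall x δ)).toNNReal
  have hKM : (K : ℝ≥0∞) ≤ M := ENNReal.coe_le_coe.2 (le_max_left _ _)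
  have hM₀ : (M : ℝ≥0∞) ≠ 0 := (hfK.trans_le hKM).ne_bot
  have hfM : (∫⁻ y, f y ∂μ) / μ (Metric.closedBall x δ) ≤ M := by
    rw [← ENNReal.coe_toNNReal (ENNReal.div_ne_top hint (hball δ hδ))]
    exact ENNReal.coe_le_coe.2 (le_max_right _ _)
  refine ⟨M, fun r hr => ?_⟩
  rcases le_total r δ with hrδ | hδr
  · exact (ENNReal.div_le_iff_le_mul (.inl (hball r hr)) (.inr hM₀)).1
      ((hδK ⟨hr, hrδ⟩ : _ ≤ (K : ℝ≥0∞)).trans hKM)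
  · calc ∫⁻ y in Metric.closedBall x r, f y ∂μ ≤ ∫⁻ y, f y ∂μ := setLIntegral_le_lintegral _ _
      _ ≤ M * μ (Metric.closedBall x δ) :=
        (ENNReal.div_le_iff_le_mul (.inl (hball δ hδ)) (.inr hM₀)).1 hfM
      _ ≤ M * μ (Metric.closedBall x r) := by gcongr

variable {n : ℕ} {α : ℝ} {b : RSp n → ℝ}

lemma Cube.volume_closedBall (Q : Cube n) (x : RSp n) :
    volume (Metric.closedBall x (n * (2 * Q.r))) =
      ENNReal.ofReal n ^ n * volume (Metric.closedBall (0 : RSp n) 1) * volume Q.set := by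
  have hr := Q.r_pos
  rw [Measure.addHaar_closedBall' _ _ (by positivity), finrank_euclideanSpace_fin, Q.volume_set,
    ENNReal.ofReal_pow (by positivity), ENNReal.ofReal_mul (by positivity)]
  ring

-- `commTestFn` reads `M_{α,Q} b` through `toReal`, which sends an infinite value to `0`.
lemma ae_restFracMaximal_lt_top (hn : 0 < n) (hα : 0 ≤ α) {Q₀ : Cube n}
    (hb : IntegrableOn b Q₀.set) : ∀ᵐ x, restFracMaximal α Q₀ b x < ∞ := by
  have ha : 0 ≤ α / (n : ℝ) := div_nonneg hα n.cast_nonneg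
  set f : RSp n → ℝ≥0∞ := Q₀.set.indicator fun y => ‖b y‖ₑ
  have hf : AEMeasurable f := (aemeasurable_indicator_iff Q₀.measurableSet).2 hb.1.enorm
  have hint : ∫⁻ y, f y ≠ ∞ := by
    rw [lintegral_indicator Q₀.measurableSet]
    exact hb.2.ne
  filter_upwards [ae_exists_lintegral_closedBall_le hf hint] with x ⟨M, hM⟩
  set V := ENNReal.ofReal n ^ n * volume (Metric.closedBall (0 : RSp n) 1)
  have hV : V < ∞ := ENNReal.mul_lt_top (ENNReal.pow_lt_top ENNReal.ofReal_lt_top)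
    measure_closedBall_lt_top
  refine lt_of_le_of_lt (b := volume Q₀.set ^ (α / (n : ℝ)) * (M * V))
    (iSup₂_le fun Q hxQ => iSup_le fun hQ => ?_)
    (ENNReal.mul_lt_top (ENNReal.rpow_lt_top_of_nonneg ha Q₀.volume_ne_top)
      (ENNReal.mul_lt_top ENNReal.coe_lt_top hV))
  have hpos : 0 < n * (2 * Q.r) := by
    have := Q.r_pos
    positivity
  have hle : ∫⁻ y in Q.set, ‖b y‖ₑ ≤ M * (V * volume Q.set) := calc
    ∫⁻ y in Q.set, ‖b y‖ₑ = ∫⁻ y in Q.set, f y :=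
      setLIntegral_congr_fun Q.measurableSet fun y hy =>
        (indicator_of_mem (hQ hy) fun y => ‖b y‖ₑ).symm
    _ ≤ ∫⁻ y in Metric.closedBall x (n * (2 * Q.r)), f y :=
      lintegral_mono_set (Q.subset_closedBall hxQ)
    _ ≤ M * (V * volume Q.set) := (hM _ hpos).trans_eq (by rw [Q.volume_closedBall])
  calc volume Q.set ^ (α / (n : ℝ) - 1) * ∫⁻ y in Q.set, ‖b y‖ₑ
      ≤ volume Q.set ^ (α / (n : ℝ) - 1) * (M * (V * volume Q.set)) := by gcongr
    _ = volume Q.set ^ (α / (n : ℝ) - 1) * volume Q.set * (M * V) := by ring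
    _ ≤ volume Q₀.set ^ (α / (n : ℝ)) * (M * V) := by
        rw [Q.volume_rpow_sub_one_mul]
        gcongr

end Finiteness

section Oscillation

lemma lintegral_enorm_eq_two_mul_lintegral_neg {X : Type*} [MeasurableSpace X] {μ : Measure X}
    {g : X → ℝ} (hg : Integrable g μ) (hg₀ : ∫ x, g x ∂μ = 0) :
    ∫⁻ x, ‖g x‖ₑ ∂μ = 2 * ∫⁻ x, ENNReal.ofReal (-g x) ∂μ := by
  have heq : ∫⁻ x, ENNReal.ofReal (g x) ∂μ = ∫⁻ x, ENNReal.ofReal (-g x) ∂μ := by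
    rw [integral_eq_lintegral_pos_part_sub_lintegral_neg_part hg, sub_eq_zero] at hg₀
    exact (ENNReal.toReal_eq_toReal_iff' hg.lintegral_lt_top.ne hg.neg.lintegral_lt_top.ne).1 hg₀
  calc ∫⁻ x, ‖g x‖ₑ ∂μ
      = ∫⁻ x, (ENNReal.ofReal (g x) + ENNReal.ofReal (-g x)) ∂μ := by
        congr 1 with x
        rcases le_total (g x) 0 with h | h
        · rw [ENNReal.ofReal_of_nonpos h, zero_add, ← Real.enorm_of_nonneg (neg_nonneg.2 h),
            enorm_neg]
        · rw [ENNReal.ofReal_of_nonpos (neg_nonpos.2 h), add_zero, Real.enorm_of_nonneg h]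
    _ = 2 * ∫⁻ x, ENNReal.ofReal (-g x) ∂μ := by
        rw [lintegral_add_left' hg.aemeasurable.ennreal_ofReal, heq, two_mul]

variable {n : ℕ} {α : ℝ} {b : RSp n → ℝ} {Q : Cube n} {x : RSp n}

lemma lintegral_nnnorm_sub_cubeAvg (hb : IntegrableOn b Q.set) :
    ∫⁻ x in Q.set, ‖b x - cubeAvg Q b‖₊ =
      2 * ∫⁻ x in Q.set, ‖max (cubeAvg Q b - b x) 0‖ₑ := by
  have hconst : IntegrableOn (fun _ => cubeAvg Q b) Q.set := integrableOn_const Q.volume_ne_top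
  refine (lintegral_enorm_eq_two_mul_lintegral_neg (hb.sub hconst)
    (setAverage_sub_setAverage Q.volume_ne_top b)).trans ?_
  congr 2 with x
  simp [Real.enorm_of_nonneg]

lemma cubeAvg_le_of_restFracMaximal_ne_top (hb : IntegrableOn b Q.set) (hx : x ∈ Q.set)
    (hfin : restFracMaximal α Q b x ≠ ∞) :
    cubeAvg Q b ≤
      (volume Q.set ^ (-(α / (n : ℝ)))).toReal * (restFracMaximal α Q b x).toReal := by
  set a := α / (n : ℝ)
  have hle : (volume Q.set)⁻¹ * ∫⁻ y in Q.set, ‖b y‖ₑ ≤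
      volume Q.set ^ (-a) * restFracMaximal α Q b x := calc
    (volume Q.set)⁻¹ * ∫⁻ y in Q.set, ‖b y‖ₑ
        = volume Q.set ^ (-a) * (volume Q.set ^ (a - 1) * ∫⁻ y in Q.set, ‖b y‖ₑ) := by
      rw [← mul_assoc, ← ENNReal.rpow_add _ _ Q.volume_ne_zero Q.volume_ne_top,
        ← ENNReal.rpow_neg_one, show -a + (a - 1) = -1 by ring]
    _ ≤ volume Q.set ^ (-a) * restFracMaximal α Q b x := by
      gcongr
      exact le_iSup₂_of_le Q hx (le_iSup_of_le Subset.rfl le_rfl)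
  have hrhs : volume Q.set ^ (-a) * restFracMaximal α Q b x ≠ ∞ := ENNReal.mul_ne_top
    (ENNReal.rpow_ne_top_of_ne_zero Q.volume_ne_zero Q.volume_ne_top) hfin
  rw [← ENNReal.toReal_mul]
  refine le_trans ?_ (ENNReal.toReal_mono hrhs hle)
  rw [cubeAvg, setAverage_eq, smul_eq_mul, ENNReal.toReal_mul, ENNReal.toReal_inv,
    ← integral_norm_eq_lintegral_enorm hb.1]
  exact mul_le_mul_of_nonneg_left (integral_mono hb hb.norm fun y => Real.le_norm_self _)
    (by positivity)

lemma ae_max_cubeAvg_sub_le (hn : 0 < n) (hα : 0 ≤ α) (hb : IntegrableOn b Q.set) :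
    ∀ᵐ x, x ∈ Q.set → max (cubeAvg Q b - b x) 0 ≤ |commTestFn α Q b x| := by
  filter_upwards [ae_restFracMaximal_lt_top hn hα hb] with x hfin hx
  have hle := cubeAvg_le_of_restFracMaximal_ne_top hb hx hfin.ne
  refine max_le ?_ (abs_nonneg _)
  rw [commTestFn, indicator_of_mem hx, abs_sub_comm]
  exact (sub_le_sub_right hle _).trans (le_abs_self _)

lemma isBMO_of_orliczNorm_commTestFn_le {ψ : RSp n → ℝ≥0 → ℝ≥0∞} {C : ℝ≥0} (hn : 0 < n)
    (hα : 0 ≤ α) (hψ : IsWeakPhi univ ψ) (hscale : ∀ Q : Cube n, ∃ S U, IsScale ψ C Q.set S U)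
    (hb : LocallyIntegrable b)
    (htest : ∃ K : ℝ≥0, ∀ Q : Cube n,
      orliczNorm ψ univ (commTestFn α Q b) ≤ K * orliczNorm ψ univ (cubeIndicator Q)) :
    IsBMO b := by
  obtain ⟨K, hK⟩ := htest
  obtain ⟨C', hC'⟩ := exists_inv_volume_mul_lintegral_le hψ hscale
  refine ⟨hb, (iSup_le fun Q => ?_).trans_lt (ENNReal.coe_lt_top (r := 2 * (C' * K)))⟩
  have hbQ : IntegrableOn b Q.set := hb.integrableOn_isCompact Q.isCompact
  set f : RSp n → ℝ := Q.set.indicator fun x => max (cubeAvg Q b - b x) 0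
  have hf : AEMeasurable f :=
    ((hb.aestronglyMeasurable.aemeasurable.const_sub _).max aemeasurable_const).indicator
      Q.measurableSet
  have hfK : orliczNorm ψ univ f ≤ K * orliczNorm ψ univ (cubeIndicator Q) := by
    refine (orliczNorm_mono (fun x => hψ.mono x (mem_univ x)) (ae_restrict_of_ae ?_)).trans (hK Q)
    filter_upwards [ae_max_cubeAvg_sub_le hn hα hbQ] with x hx
    by_cases hxQ : x ∈ Q.set
    · simp only [f, ← NNReal.coe_le_coe, coe_nnnorm, Real.norm_eq_abs, indicator_of_mem hxQ,
        abs_of_nonneg (le_max_right (cubeAvg Q b - b x) 0)]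
      exact hx hxQ
    · simp [f, hxQ]
  calc (volume Q.set)⁻¹ * ∫⁻ x in Q.set, ‖b x - cubeAvg Q b‖₊
      = 2 * ((volume Q.set)⁻¹ * ∫⁻ x in Q.set, ‖f x‖ₑ) := by
        rw [lintegral_nnnorm_sub_cubeAvg hbQ, mul_left_comm]
        congr 2
        exact setLIntegral_congr_fun Q.measurableSet fun x hx => by
          simp only [f, indicator_of_mem hx]
    _ ≤ 2 * (C' * K) := mul_le_mul_right (hC' Q f K hf hfK) 2
    _ = (2 * (C' * K) : ℝ≥0) := by push_cast; rfl

end Oscillation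

theorem statement16_general {n : ℕ} (hn : 0 < n) {α : ℝ} (hα₀ : 0 ≤ α) (hα : α ≤ n)
    {φ ψ : RSp n → ℝ≥0 → ℝ≥0∞} (hφ : IsWeakPhi univ φ) (hψ : IsWeakPhi univ ψ)
    (hinv : FracInvRel α φ ψ) (h0 : A0 univ φ) (h1 : A1 φ) (h2 : A2 φ)
    {b : RSp n → ℝ} (hb : LocallyIntegrable b)
    (hbound : ∃ C : ℝ≥0, ∀ f : RSp n → ℝ, MemOrlicz φ univ f →
      orliczNorm ψ univ (fracMaximalCommutator α b f) ≤ C * orliczNorm φ univ f) :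
    IsBMO b ∧ ∃ C : ℝ≥0, ∀ Q : Cube n,
      orliczNorm ψ univ (commTestFn α Q b) ≤ C * orliczNorm ψ univ (cubeIndicator Q) := by
  have htest := exists_orliczNorm_commTestFn_le hα₀ hα hφ hψ hinv h0 hbound
  obtain ⟨C, hscale⟩ := exists_isScale hn hφ hψ hinv h0 h1 h2
  exact ⟨isBMO_of_orliczNorm_commTestFn_le hn hα₀ hψ hscale hb htest, htest⟩

/-- if `[M_α,b] : L^φ(ℝⁿ) → L^ψ(ℝⁿ)` is bounded, then `b ∈ BMO(ℝⁿ)`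
and `‖(b − |Q|^{−α/n}M_{α,Q}b)χ_Q‖_ψ ≤ C‖χ_Q‖_ψ` uniformly in the cube `Q`. -/
theorem statement16 {n : ℕ} (hn : 0 < n) (p q α r : ℝ)
    (φ ψ : RSp n → ℝ≥0 → ℝ≥0∞)
    (hp : 1 < p) (hpq : p ≤ q) (hα : α / (n : ℝ) = 1 / p - 1 / q)
    (hφ : IsWeakPhi Set.univ φ) (hψ : IsWeakPhi Set.univ ψ)
    (hinv : FracInvRel α φ ψ)
    (hr₁ : α / (n : ℝ) < r) (hr₂ : r ≤ 1 / p)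
    (ha0 : A0 Set.univ φ) (ha1 : A1 φ) (ha2 : A2 φ)
    (hainc : AInc p Set.univ φ) (hadec : ADec (1 / r) Set.univ φ)
    (b : RSp n → ℝ) (hb : LocallyIntegrable b volume)
    (hbound : ∃ C : ℝ≥0, ∀ f : RSp n → ℝ, MemOrlicz φ Set.univ f →
      orliczNorm ψ Set.univ (fracMaximalCommutator α b f) ≤
        (C : ℝ≥0∞) * orliczNorm φ Set.univ f) :
    IsBMO b ∧
    ∃ C : ℝ≥0, ∀ Q : Cube n,
      orliczNorm ψ Set.univ (commTestFn α Q b) ≤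
        (C : ℝ≥0∞) * orliczNorm ψ Set.univ (cubeIndicator Q) := by
  have hn' : (0 : ℝ) < n := Nat.cast_pos.2 hn
  have hα₀ : 0 ≤ α := by
    rw [(div_eq_iff hn'.ne').1 hα]
    exact mul_nonneg (sub_nonneg.2 (one_div_le_one_div_of_le (one_pos.trans hp) hpq)) hn'.le
  have hα₁ : α ≤ n := (div_le_one hn').1
    (hr₁.le.trans (hr₂.trans ((div_le_one (one_pos.trans hp)).2 hp.le)))
  exact statement16_general hn hα₀ hα₁ hφ hψ hinv ha0 ha1 ha2 hb hbound
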